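/- Let p: E → B and p': E' → B' be fibrations with E and E' metric spaces, and suppose there is a commutative diagram of maps F: E → E', F': E' → E over maps f: B → B' and f': B' → B (i.e., p' ∘ F = f ∘ p and p ∘ F' = f' ∘ p'). If f' ∘ f is homotopic to the identity of B, then dsecat(p) ≤ dsecat(p'). -/

import Mathlib

open MeasureTheory unitInterval Set

universe u v

/-- A (Hurewicz) fibration: a continuous map with the homotopy lifting property
with respect to all topological spaces. -/
def IsHurewiczFibration {E B : Type*} [TopologicalSpace E] [TopologicalSpace B]
    (p : E → B) : Prop :=
  Continuous p ∧
  ∀ (X : Type u) [TopologicalSpace X] (f : X → E) (H : X × I → B),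
    Continuous f → Continuous H → (∀ x, H (x, 0) = p (f x)) →
    ∃ G : X × I → E, Continuous G ∧ (∀ x, G (x, 0) = f x) ∧ ∀ z, H z = p (G z)

/-- `dsecat p`: the distributional sectional category of `p : E → B` (with `E` a metric
space), namely the smallest `n` such that the fibration
`𝔅ₙ₊₁(p) : Eₙ₊₁(p) → B` of probability measures with finite support of size at most `n+1`
contained in single fibers of `p` (with the Lévy–Prokhorov metric topology) admits a
continuous section.  (Value `⊤` if no such `n` exists.) -/
noncomputable def dsecat {E : Type u} {B : Type v} [MetricSpace E] [TopologicalSpace B]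
    (p : E → B) : ℕ∞ :=
  letI : MeasurableSpace E := borel E
  haveI : BorelSpace E := ⟨rfl⟩
  sInf {n : ℕ∞ | ∃ m : ℕ, n = (m : ℕ∞) ∧
    ∃ s : B → LevyProkhorov (ProbabilityMeasure E), Continuous s ∧
      ∀ b : B, ∃ S : Finset E, S.card ≤ m + 1 ∧ (↑S : Set E) ⊆ p ⁻¹' {b} ∧
        (s b).toMeasure (↑S : Set E) = 1}

/-- The classical sectional category (Schwarz genus) of a map: the least `n` such that the
base admits a cover by `n+1` open sets over each of which there is a continuous partial
section. -/
noncomputable def secat {E : Type u} {B : Type v} [TopologicalSpace E] [TopologicalSpace B]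
    (p : E → B) : ℕ∞ :=
  sInf {n : ℕ∞ | ∃ m : ℕ, n = (m : ℕ∞) ∧
    ∃ U : Fin (m + 1) → Set B, (∀ i, IsOpen (U i)) ∧ (⋃ i, U i) = Set.univ ∧
      ∀ i, ∃ s : U i → E, Continuous s ∧ ∀ x : U i, p (s x) = (x : B)}

/-- The point `(i)/(r-1)` of the unit interval, for `i : Fin r`. -/
noncomputable def tDiv (r : ℕ) (i : Fin r) : I :=
  Set.projIcc (0 : ℝ) 1 zero_le_one ((i : ℝ) / (r - 1))

/-- The space `E^I_B` of paths in `E` lying in one single fiber of `p : E → B`. -/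
def FibredPaths {E : Type u} {B : Type v} [TopologicalSpace E] [TopologicalSpace B]
    (p : E → B) : Type u :=
  {γ : C(I, E) // ∃ b : B, ∀ t : I, p (γ t) = b}

/-- The fibred product `E^r_B` of `r` copies of `E` over `B`. -/
def FibredProd {E : Type u} {B : Type v} [TopologicalSpace E] [TopologicalSpace B]
    (p : E → B) (r : ℕ) : Type u :=
  {x : Fin r → E // ∀ i j, p (x i) = p (x j)}

/-- The fibration `Π_r^E : E^I_B → E^r_B`,
`γ ↦ (γ(0), γ(1/(r-1)), …, γ((r-2)/(r-1)), γ(1))`. -/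
noncomputable def parmEval {E : Type u} {B : Type v} [TopologicalSpace E] [TopologicalSpace B]
    (p : E → B) (r : ℕ) : FibredPaths p → FibredProd p r :=
  fun γ => ⟨fun i => γ.1 (tDiv r i), by
    obtain ⟨b, hb⟩ := γ.2
    intro i j
    rw [hb, hb]⟩

noncomputable instance {E : Type u} {B : Type v} [MetricSpace E] [TopologicalSpace B] (p : E → B) :
    MetricSpace (FibredPaths p) :=
  inferInstanceAs (MetricSpace {γ : C(I, E) // ∃ b : B, ∀ t : I, p (γ t) = b})

instance {E : Type u} {B : Type v} [TopologicalSpace E] [TopologicalSpace B] (p : E → B) :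
    TopologicalSpace (FibredPaths p) :=
  inferInstanceAs (TopologicalSpace {γ : C(I, E) // ∃ b : B, ∀ t : I, p (γ t) = b})

instance {E : Type u} {B : Type v} [TopologicalSpace E] [TopologicalSpace B] (p : E → B)
    (r : ℕ) : TopologicalSpace (FibredProd p r) :=
  inferInstanceAs (TopologicalSpace {x : Fin r → E // ∀ i j, p (x i) = p (x j)})

/-- The `r`-th sequential parametrized distributional complexity
`dTC_r[p : E → B] = dsecat (Π_r^E)`. -/
noncomputable def dTCfib {E : Type u} {B : Type v} [MetricSpace E] [TopologicalSpace B]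
    (p : E → B) (r : ℕ) : ℕ∞ :=
  dsecat (parmEval p r)

/-- The `r`-th sequential parametrized topological complexity
`TC_r[p : E → B] = secat (Π_r^E)`. -/
noncomputable def TCfib {E : Type u} {B : Type v} [TopologicalSpace E] [TopologicalSpace B]
    (p : E → B) (r : ℕ) : ℕ∞ :=
  secat (parmEval p r)

/-- The fibration `π_r^X : X^I → X^r`, `φ ↦ (φ(0), φ(1/(r-1)), …, φ(1))`. -/
noncomputable def freeEval (X : Type u) [TopologicalSpace X] (r : ℕ) :
    C(I, X) → (Fin r → X) :=
  fun φ i => φ (tDiv r i)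

/-- The `r`-th sequential distributional complexity `dTC_r(X) = dsecat (π_r^X)`. -/
noncomputable def dTC (X : Type u) [MetricSpace X] (r : ℕ) : ℕ∞ :=
  dsecat (freeEval X r)

/-- The distributional category `dcat(X) = dsecat (P₀(X) → X)` of a pointed space,
where `P₀(X) = {φ : I → X | φ(1) = x₀}` and the fibration is evaluation at `0`. -/
noncomputable def dcat (X : Type u) [MetricSpace X] (x₀ : X) : ℕ∞ :=
  dsecat (fun φ : {φ : C(I, X) // φ 1 = x₀} => φ.1 0)

/-!
Pulling `p'` back along `f` gives the space of pairs `(b, e')` with `f b = p' e'`. On it,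
`(b, e') ↦ F' e'` lies over `f' ∘ f`, so lifting the homotopy `f' ∘ f ≃ id` along `p` deforms it
into a map `g` to `E` over `id`. If `s` is a section of `𝔅ₖ(p')`, then pushing `s (f b)` forward
along `g b` gives a section of `𝔅ₖ(p)`. As `E'` need not be separable, continuity of the latter is
shown for the Lévy–Prokhorov distance itself instead of through weak convergence.
-/

open Filter Topology Metric
open scoped ENNReal

section Pushforward

variable {X Y : Type*} [MeasurableSpace X] [PseudoEMetricSpace X]
  [MeasurableSpace Y] [PseudoEMetricSpace Y] [OpensMeasurableSpace Y]

lemma measure_map_le_measure_map_thickening_add {μ ν : Measure X} {g h : X → Y} {K L : Set X}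
    {δ ε : ℝ≥0∞} (hμν : levyProkhorovEDist μ ν < δ) (hδε : δ ≤ ε) (hε : ε ≠ ∞)
    (hg : AEMeasurable g μ) (hh : AEMeasurable h ν)
    (hK : ∀ᵐ x ∂μ, x ∈ K) (hL : ∀ᵐ y ∂ν, y ∈ L)
    (hgh : ∀ x ∈ K, ∀ y ∈ L, edist x y < δ → edist (g x) (h y) < ε)
    {A : Set Y} (hA : MeasurableSet A) :
    μ.map g A ≤ ν.map h (thickening ε.toReal A) + ε := by
  have hKA : (g ⁻¹' A ∩ K : Set X) =ᵐ[μ] g ⁻¹' A :=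
    inter_ae_eq_left_of_ae_eq_univ (eventuallyEq_univ.2 hK)
  obtain ⟨T, hTKA, hT, hT_ae⟩ :=
    ((hg.nullMeasurable hA).congr hKA.symm).exists_measurable_subset_ae_eq
  have h_thickening : thickening δ.toReal T ≤ᵐ[ν] h ⁻¹' thickening ε.toReal A := by
    filter_upwards [hL] with y hyL hy
    obtain ⟨x, hxT, hyx⟩ := (mem_thickening_iff_exists_edist_lt _ _).1 hy
    obtain ⟨hxA, hxK⟩ := hTKA hxT
    refine (mem_thickening_iff_exists_edist_lt _ _).2 ⟨g x, hxA, ?_⟩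
    rw [ENNReal.ofReal_toReal hε, edist_comm]
    exact hgh x hxK y hyL (edist_comm x y ▸ hyx.trans_le ENNReal.ofReal_toReal_le)
  calc μ.map g A = μ T := by
        rw [Measure.map_apply_of_aemeasurable hg hA, measure_congr (hT_ae.trans hKA)]
    _ ≤ ν (thickening δ.toReal T) + δ := left_measure_le_of_levyProkhorovEDist_lt hμν hT
    _ ≤ ν (h ⁻¹' thickening ε.toReal A) + ε := add_le_add (measure_mono_ae h_thickening) hδε
    _ = ν.map h (thickening ε.toReal A) + ε := by
        rw [Measure.map_apply_of_aemeasurable hh isOpen_thickening.measurableSet]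

lemma levyProkhorovEDist_map_le {μ ν : Measure X} {g h : X → Y} {K L : Set X}
    {δ ε : ℝ≥0∞} (hμν : levyProkhorovEDist μ ν < δ) (hδε : δ ≤ ε)
    (hg : AEMeasurable g μ) (hh : AEMeasurable h ν)
    (hK : ∀ᵐ x ∂μ, x ∈ K) (hL : ∀ᵐ y ∂ν, y ∈ L)
    (hgh : ∀ x ∈ K, ∀ y ∈ L, edist x y < δ → edist (g x) (h y) ≤ ε) :
    levyProkhorovEDist (μ.map g) (ν.map h) ≤ ε := by
  refine levyProkhorovEDist_le_of_forall _ _ _ fun η A hεη hη hA => ⟨?_, ?_⟩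
  · exact measure_map_le_measure_map_thickening_add hμν (hδε.trans hεη.le) hη.ne hg hh hK hL
      (fun x hx y hy hxy => (hgh x hx y hy hxy).trans_lt hεη) hA
  · rw [levyProkhorovEDist_comm] at hμν
    refine measure_map_le_measure_map_thickening_add hμν (hδε.trans hεη.le) hη.ne hh hg hL hK
      (fun y hy x hx hyx => ?_) hA
    rw [edist_comm] at hyx ⊢
    exact (hgh x hx y hy hyx).trans_lt hεη

end Pushforward

section Families

variable {B X Y : Type*} [TopologicalSpace B] [PseudoEMetricSpace X] [PseudoEMetricSpace Y]
  {K : B → Set X} {g : B → X → Y}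

lemma eventually_edist_lt_of_continuousOn_uncurry
    (hg : ContinuousOn (Function.uncurry g) {z | z.2 ∈ K z.1}) {b₀ : B} {y₀ : X} (hy₀ : y₀ ∈ K b₀)
    {ε : ℝ≥0∞} (hε : 0 < ε) :
    ∀ᶠ w : (ℝ≥0∞ × B) × X in 𝓝 ((0, b₀), y₀),
      w.2 ∈ K b₀ → ∀ x ∈ K w.1.2, edist x w.2 < w.1.1 → edist (g w.1.2 x) (g b₀ w.2) < ε := by
  have h_near := eventually_nhdsWithin_iff.1
    (EMetric.tendsto_nhds.1 (hg (b₀, y₀) hy₀) (ε / 2) (ENNReal.half_pos hε.ne'))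
  rw [nhds_prod_eq] at h_near
  obtain ⟨U, hU, V, hV, hUV⟩ := eventually_prod_iff.1 h_near
  obtain ⟨r, hr, hrV⟩ := nhds_basis_eball.eventually_iff.1 hV
  have hr₂ : 0 < r / 2 := ENNReal.half_pos hr.ne'
  filter_upwards [(continuous_fst.snd.tendsto ((0, b₀), y₀)).eventually hU,
    (continuous_fst.fst.tendsto ((0, b₀), y₀)).eventually_lt_const hr₂,
    (continuous_snd.tendsto ((0, b₀), y₀)).eventually (eball_mem_nhds y₀ hr₂)]
    with ⟨⟨δ, b⟩, y⟩ hb hδ hy hyK x hxK hxy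
  have hxr : edist x y₀ < r :=
    calc edist x y₀ ≤ edist x y + edist y y₀ := edist_triangle _ _ _
      _ < r / 2 + r / 2 := ENNReal.add_lt_add (hxy.trans hδ) hy
      _ = r := ENNReal.add_halves r
  have hyr : edist y y₀ < r := hy.trans_le ENNReal.half_le_self
  calc edist (g b x) (g b₀ y) ≤ edist (g b x) (g b₀ y₀) + edist (g b₀ y) (g b₀ y₀) :=
        edist_triangle_right _ _ _
    _ < ε / 2 + ε / 2 :=
        ENNReal.add_lt_add (hUV hb (hrV hxr) hxK) (hUV hU.self_of_nhds (hrV hyr) hyK)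
    _ = ε := ENNReal.add_halves ε

lemma exists_pos_eventually_edist_lt_of_isCompact
    (hg : ContinuousOn (Function.uncurry g) {z | z.2 ∈ K z.1}) {b₀ : B} (hK : IsCompact (K b₀))
    {ε : ℝ≥0∞} (hε : 0 < ε) :
    ∃ δ > 0, ∀ᶠ b in 𝓝 b₀, ∀ x ∈ K b, ∀ y ∈ K b₀, edist x y < δ →
      edist (g b x) (g b₀ y) < ε := by
  -- Treating `δ` as a parameter near `0` lets compactness of `K b₀` yield one `δ` for all `y`.
  have h_unif := hK.eventually_forall_of_forall_eventually
    (P := fun (q : ℝ≥0∞ × B) y => y ∈ K b₀ → ∀ x ∈ K q.2, edist x y < q.1 →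
      edist (g q.2 x) (g b₀ y) < ε)
    fun y hy => eventually_edist_lt_of_continuousOn_uncurry hg hy hε
  obtain ⟨δ, h_close, hδ⟩ := ((h_unif.curry_nhds.filter_mono nhdsWithin_le_nhds).and
    (self_mem_nhdsWithin (s := Ioi 0))).exists
  exact ⟨δ, hδ, h_close.mono fun b hb x hx y hy => hb y hy hy x hx⟩

variable [MeasurableSpace X] [MeasurableSpace Y] [OpensMeasurableSpace X] [OpensMeasurableSpace Y]

lemma continuous_ofMeasure_map {s : B → LevyProkhorov (ProbabilityMeasure X)} (hs : Continuous s)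
    (hK : ∀ b, IsCompact (K b)) (hsK : ∀ b, ∀ᵐ x ∂((s b).toMeasure : Measure X), x ∈ K b)
    (hg : ContinuousOn (Function.uncurry g) {z | z.2 ∈ K z.1})
    (hg_meas : ∀ b, AEMeasurable (g b) ((s b).toMeasure : Measure X)) :
    Continuous fun b => LevyProkhorov.ofMeasure ((s b).toMeasure.map (hg_meas b)) := by
  refine continuous_iff_continuousAt.2 fun b₀ => EMetric.tendsto_nhds.2 fun ε hε => ?_
  obtain ⟨η, hη, hηε⟩ := exists_between hε
  obtain ⟨δ, hδ, h_close⟩ := exists_pos_eventually_edist_lt_of_isCompact hg (hK b₀) hη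
  filter_upwards [h_close, EMetric.tendsto_nhds.1 (hs.tendsto b₀) (min δ η) (lt_min hδ hη)]
    with b hb hsb
  refine lt_of_le_of_lt ?_ hηε
  exact levyProkhorovEDist_map_le hsb (min_le_right δ η) (hg_meas b) (hg_meas b₀) (hsK b)
    (hsK b₀) fun x hx y hy hxy => (hb x hx y hy (hxy.trans_le (min_le_left δ η))).le

end Families

/-- The set `B_k(A)` of probability measures supported on at most `k` points of `A`. -/
def finSuppMeasures {X : Type*} [MeasurableSpace X] (k : ℕ) (A : Set X) :
    Set (ProbabilityMeasure X) :=
  {μ | ∃ S : Finset X, S.card ≤ k ∧ ↑S ⊆ A ∧ μ S = 1}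

lemma map_mem_finSuppMeasures {X Y : Type*} [MeasurableSpace X] [MeasurableSpace Y]
    [MeasurableSingletonClass Y] {k : ℕ} {A : Set X} {C : Set Y} {μ : ProbabilityMeasure X}
    (hμ : μ ∈ finSuppMeasures k A) {g : X → Y} (hg : AEMeasurable g μ) (hgAC : MapsTo g A C) :
    μ.map hg ∈ finSuppMeasures k C := by
  classical
  obtain ⟨S, hSk, hSA, hμS⟩ := hμ
  refine ⟨S.image g, Finset.card_image_le.trans hSk, ?_, ?_⟩
  · rw [Finset.coe_image]
    exact (hgAC.mono_left hSA).image_subset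
  · refine le_antisymm (ProbabilityMeasure.apply_le_one _ _) ?_
    rw [ProbabilityMeasure.map_apply _ _ (Finset.measurableSet _), Finset.coe_image, ← hμS]
    exact ProbabilityMeasure.apply_mono _ (subset_preimage_image g S)

lemma ae_mem_of_apply_eq_one {X : Type*} [MeasurableSpace X] {μ : ProbabilityMeasure X}
    {S : Set X} (hS : MeasurableSet S) (hμS : μ S = 1) : ∀ᵐ x ∂(μ : Measure X), x ∈ S := by
  refine (mem_ae_iff_prob_eq_one hS).2 ?_
  rw [← ProbabilityMeasure.ennreal_coeFn_eq_coeFn_toMeasure, hμS, ENNReal.coe_one]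

/-- Continuous sections of `𝔅ₖ(p) : Eₖ(p) → B`, regarded as maps into the space of all probability
measures on `E`. -/
def IsDistributionalSection {E B : Type*} [PseudoEMetricSpace E] [MeasurableSpace E]
    [OpensMeasurableSpace E] [TopologicalSpace B] (p : E → B) (k : ℕ)
    (s : B → LevyProkhorov (ProbabilityMeasure E)) : Prop :=
  Continuous s ∧ ∀ b, (s b).toMeasure ∈ finSuppMeasures k (p ⁻¹' {b})

lemma IsDistributionalSection.exists_of_fiberwise_map {E B E' B' : Type*} [EMetricSpace E]
    [MeasurableSpace E] [BorelSpace E] [TopologicalSpace B] [EMetricSpace E'] [MeasurableSpace E']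
    [OpensMeasurableSpace E'] [TopologicalSpace B'] {p : E → B} {p' : E' → B'} {f : B → B'}
    {k : ℕ} {s : B' → LevyProkhorov (ProbabilityMeasure E')} (hs : IsDistributionalSection p' k s)
    (hf : Continuous f) {g : B → E' → E}
    (hg : ContinuousOn (Function.uncurry g) {z | f z.1 = p' z.2})
    (hpg : ∀ b e', f b = p' e' → p (g b e') = b) :
    ∃ t, IsDistributionalSection p k t := by
  obtain ⟨hs_cont, hs_supp⟩ := hs
  choose S _ hSp hsS using fun b => hs_supp (f b)
  have hsS_ae b := ae_mem_of_apply_eq_one (S b).measurableSet (hsS b)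
  have hg_supp : ContinuousOn (Function.uncurry g) {z | z.2 ∈ (S z.1 : Set E')} :=
    hg.mono fun z hz => (hSp z.1 hz).symm
  have hg_meas b : AEMeasurable (g b) ((s (f b)).toMeasure : Measure E') := by
    rw [← Measure.restrict_eq_self_of_ae_mem (hsS_ae b)]
    have hgb : ContinuousOn (g b) (S b) :=
      hg_supp.comp (f := (b, ·)) (by fun_prop) fun _ he => he
    exact hgb.aemeasurable (S b).measurableSet
  refine ⟨_, continuous_ofMeasure_map (hs_cont.comp hf) (fun b => (S b).finite_toSet.isCompact)
    hsS_ae hg_supp hg_meas, fun b => ?_⟩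
  exact map_mem_finSuppMeasures (hs_supp (f b)) (hg_meas b) fun e' he' => hpg b e' he'.symm

lemma dsecat_le_dsecat_of_sections {E B E' B' : Type*} [MetricSpace E]
    [TopologicalSpace B] [MetricSpace E'] [TopologicalSpace B'] [MeasurableSpace E]
    [MeasurableSpace E'] [BorelSpace E] [BorelSpace E'] {p : E → B} {p' : E' → B'}
    (h : ∀ k s, IsDistributionalSection p' k s → ∃ t, IsDistributionalSection p k t) :
    dsecat p ≤ dsecat p' := by
  obtain rfl : ‹MeasurableSpace E› = borel E := BorelSpace.measurable_eq
  obtain rfl : ‹MeasurableSpace E'› = borel E' := BorelSpace.measurable_eq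
  refine sInf_le_sInf ?_
  rintro n ⟨m, rfl, s, hs⟩
  exact ⟨m, rfl, h (m + 1) s hs⟩

universe u' v' w

lemma IsHurewiczFibration.exists_fiberwise_map {E : Type u} {B : Type v} {E' : Type u'}
    {B' : Type v'} [TopologicalSpace E] [TopologicalSpace B] [TopologicalSpace E']
    {p : E → B} {p' : E' → B'} {F' : E' → E} {f : B → B'} {f' : B' → B}
    (hp : IsHurewiczFibration.{max v u' w} p) (hF' : Continuous F')
    (hcomm : ∀ e', p (F' e') = f' (p' e')) {H : B × I → B} (hH : Continuous H)
    (hH₀ : ∀ b, H (b, 0) = f' (f b)) (hH₁ : ∀ b, H (b, 1) = b) :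
    ∃ g : B → E' → E, ContinuousOn (Function.uncurry g) {z | f z.1 = p' z.2} ∧
      ∀ b e', f b = p' e' → p (g b e') = b := by
  obtain ⟨G, hG, -, hpG⟩ := hp.2 (ULift.{w} (f.Pullback p')) (fun x => F' x.down.1.2)
    (fun z => H (z.1.down.1.1, z.2)) (by fun_prop) (by fun_prop)
    fun ⟨⟨⟨b, e'⟩, (hbe : f b = p' e')⟩⟩ => by simp only [hH₀, hcomm, hbe]
  let g₁ : f.Pullback p' → E := fun x => G (ULift.up x, 1)
  -- Off the pullback the values of `g` are arbitrary; they come from `F'` as `E` may be empty.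
  let g₀ : B × E' → E := Function.extend Subtype.val g₁ fun z => F' z.2
  have hg₀ : ∀ x : f.Pullback p', g₀ x = g₁ x := Subtype.val_injective.extend_apply g₁ _
  refine ⟨Function.curry g₀, ?_, fun b e' hbe => ?_⟩
  · rw [Function.uncurry_curry, continuousOn_iff_continuous_domRestrict]
    exact (show Continuous g₁ by fun_prop).congr fun x => (hg₀ x).symm
  · rw [Function.curry_apply, hg₀ ⟨(b, e'), hbe⟩, ← hpG, hH₁]

theorem dsecat_le_of_retract_up_to_homotopy_general {E : Type u} {B : Type v} {E' : Type u'}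
    {B' : Type v'} [MetricSpace E] [TopologicalSpace B] [MetricSpace E'] [TopologicalSpace B']
    (p : E → B) (p' : E' → B') (F' : E' → E) (f : B → B') (f' : B' → B)
    (hp : IsHurewiczFibration.{max v u' w} p) (hF' : Continuous F') (hf : Continuous f)
    (hcomm : ∀ e', p (F' e') = f' (p' e'))
    (hhtpy : ∃ H : B × I → B, Continuous H ∧
      (∀ b, H (b, 0) = f' (f b)) ∧ (∀ b, H (b, 1) = b)) :
    dsecat p ≤ dsecat p' := by
  obtain ⟨H, hH, hH₀, hH₁⟩ := hhtpy
  obtain ⟨g, hg, hpg⟩ := hp.exists_fiberwise_map hF' hcomm hH hH₀ hH₁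
  borelize E E'
  exact dsecat_le_dsecat_of_sections fun k s hs => hs.exists_of_fiberwise_map hf hg hpg

/-- Given fibrations `p : E → B`, `p' : E' → B'` (metric total spaces)
and a commutative diagram of maps `F : E → E'`, `F' : E' → E` over `f : B → B'`,
`f' : B' → B` with `f' ∘ f ≃ id_B`, one has `dsecat p ≤ dsecat p'`. -/
theorem dsecat_le_of_retract_up_to_homotopy {E B E' B' : Type} [MetricSpace E]
    [TopologicalSpace B] [MetricSpace E'] [TopologicalSpace B']
    (p : E → B) (p' : E' → B') (F : E → E') (F' : E' → E) (f : B → B') (f' : B' → B)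
    (hp : IsHurewiczFibration p) (hp' : IsHurewiczFibration p')
    (hF : Continuous F) (hF' : Continuous F') (hf : Continuous f) (hf' : Continuous f')
    (hcomm₁ : ∀ e, p' (F e) = f (p e)) (hcomm₂ : ∀ e', p (F' e') = f' (p' e'))
    (hhtpy : ∃ H : B × I → B, Continuous H ∧
      (∀ b, H (b, 0) = f' (f b)) ∧ (∀ b, H (b, 1) = b)) :
    dsecat p ≤ dsecat p' :=
  dsecat_le_of_retract_up_to_homotopy_general p p' F' f f' hp hF' hf hcomm₂ hhtpy
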